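/- For each node v of the DFS tree T_G of a cactus graph G, there exists at most one cycle C(x,y) of T_G such that v lies on the path of C(x,y) and v is not the start node x. -/

import Mathlib

/-- In an acyclic graph, if a path `q` ending at `v` passes through `x ≠ v`, then every path from `x`
through `v` contains the vertex preceding `v` on `q`. -/
theorem SimpleGraph.IsAcyclic.penultimate_mem_support {V : Type*} {T : SimpleGraph V}
    (hT : T.IsAcyclic) {r x y v : V} {p : T.Walk x y} (hp : p.IsPath)
    {q : T.Walk r v} (hq : q.IsPath) (hv : v ∈ p.support) (hx : x ∈ q.support) (hvx : v ≠ x) :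
    q.penultimate ∈ p.support := by
  classical
  have heq : q.dropUntil x hx = p.takeUntil v hv :=
    congrArg Subtype.val ((hT.subsingleton_path x v).elim ⟨_, hq.dropUntil hx⟩ ⟨_, hp.takeUntil hv⟩)
  have hnil : ¬ (q.dropUntil x hx).Nil := SimpleGraph.Walk.not_nil_of_ne hvx.symm
  have hpen : (q.dropUntil x hx).penultimate = q.penultimate := by
    have hlen : 0 < (q.dropUntil x hx).length :=
      Nat.pos_of_ne_zero fun h => hnil (SimpleGraph.Walk.length_eq_zero_iff.mp h)
    conv_rhs => rw [← q.take_spec hx]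
    rw [SimpleGraph.Walk.penultimate, SimpleGraph.Walk.penultimate,
      SimpleGraph.Walk.getVert_append, SimpleGraph.Walk.length_append, if_neg (by lia)]
    congr 1
    lia
  rw [← hpen, heq]
  exact p.support_takeUntil_subset_support hv (SimpleGraph.Walk.getVert_mem_support _ _)

/-- For each node `v` of the DFS tree `T_G` of a cactus graph there is at most one cycle
`C(x,y)` (represented by its tree path `p` from start node `x` to end node `y`) that
contains `v` but where `v` is not the start node: any two such cycles coincide. -/
theorem stmt_2 {V : Type*} [Fintype V] [DecidableEq V] (T : SimpleGraph V)
    (hT : T.IsTree) (r : V) (x y x' y' v : V)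
    (p : T.Path x y) (p' : T.Path x' y')
    -- start nodes are ancestors of every vertex of their cycle path
    (hanc : ∀ z ∈ p.1.support, ∀ q : T.Path r z, x ∈ q.1.support)
    (hanc' : ∀ z ∈ p'.1.support, ∀ q : T.Path r z, x' ∈ q.1.support)
    -- cactus property: distinct cycles share at most one vertex
    (hcactus : (x, y) ≠ (x', y') →
      (p.1.support.toFinset ∩ p'.1.support.toFinset).card ≤ 1)
    (hv : v ∈ p.1.support) (hv' : v ∈ p'.1.support)
    (hvx : v ≠ x) (hvx' : v ≠ x') :
    (x, y) = (x', y') := by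
  by_contra hne
  obtain ⟨q⟩ : Nonempty (T.Path r v) := (hT.connected r v).elim fun w => ⟨w.toPath⟩
  have hx := hanc v hv q
  have hx' := hanc' v hv' q
  have hnil : ¬ q.1.Nil := fun h => by
    have := SimpleGraph.Walk.nil_iff_support_eq.mp h
    rw [this, List.mem_singleton] at hx
    exact hvx (hx.trans h.eq).symm
  refine (q.1.adj_penultimate hnil).ne (Finset.card_le_one.mp (hcactus hne) _ ?_ _ ?_)
  · simpa using ⟨hT.isAcyclic.penultimate_mem_support p.2 q.2 hv hx hvx,
      hT.isAcyclic.penultimate_mem_support p'.2 q.2 hv' hx' hvx'⟩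
  · simpa using ⟨hv, hv'⟩
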